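/- Suppose the directed graph G is strongly connected. Let δ̄ = max_{i∈V} max(δ_{i,in}, δ_{i,out}), let r = max{ Re(λ) : λ a nonzero eigenvalue of M(0) } (which is negative), and set τ̃ = (1/(2δ̄))·arctan(−r/δ̄). Then for every delay τ with 0 < τ < τ̃ there exists ε̃ > 0 such that for all ε ∈ (0, ε̃] the following holds: every continuous function y = (x,z) : [−τ,∞) → ℝ^n × ℝ^n that is differentiable on (0,∞), satisfies ẏ(t) = M(ε)·y(t−τ) for all t > 0, and satisfies y(θ) = (x₀, 0) for all θ ∈ [−τ, 0], has lim_{t→∞} x(t) = ((𝟙ᵀx₀)/n)·𝟙, where 𝟙 is the all-ones vector in ℝ^n. -/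

import Mathlib

open Matrix Complex Filter

noncomputable section

/-- Adjacency matrix of a directed graph on `n` nodes with edge relation `E`. -/
def adjM (n : ℕ) (E : Fin n → Fin n → Prop) [DecidableRel E] :
    Matrix (Fin n) (Fin n) ℝ := fun i j => if E i j then 1 else 0

/-- In-degree of node `i`. -/
def degIn (n : ℕ) (E : Fin n → Fin n → Prop) [DecidableRel E] (i : Fin n) : ℝ :=
  ∑ j, adjM n E i j

/-- Out-degree of node `i`. -/
def degOut (n : ℕ) (E : Fin n → Fin n → Prop) [DecidableRel E] (i : Fin n) : ℝ :=
  ∑ j, adjM n E j i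

/-- In-Laplacian `L_in = D_in − A`. -/
def Lin (n : ℕ) (E : Fin n → Fin n → Prop) [DecidableRel E] :
    Matrix (Fin n) (Fin n) ℝ := Matrix.diagonal (degIn n E) - adjM n E

/-- Out-Laplacian `L_out = D_out − A`. -/
def Lout (n : ℕ) (E : Fin n → Fin n → Prop) [DecidableRel E] :
    Matrix (Fin n) (Fin n) ℝ := Matrix.diagonal (degOut n E) - adjM n E

/-- The block matrix `M(ε) = [[−L_in, εI],[L_in, −L_out − εI]]`. -/
def Mmat (n : ℕ) (E : Fin n → Fin n → Prop) [DecidableRel E] (ε : ℝ) :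
    Matrix (Fin n ⊕ Fin n) (Fin n ⊕ Fin n) ℝ :=
  Matrix.fromBlocks (-(Lin n E)) (ε • (1 : Matrix (Fin n) (Fin n) ℝ))
    (Lin n E) (-(Lout n E) - ε • (1 : Matrix (Fin n) (Fin n) ℝ))

/-- `M(ε)` viewed as a complex matrix. -/
def MmatC (n : ℕ) (E : Fin n → Fin n → Prop) [DecidableRel E] (ε : ℝ) :
    Matrix (Fin n ⊕ Fin n) (Fin n ⊕ Fin n) ℂ :=
  (Mmat n E ε).map (Complex.ofReal)

/-- A directed graph is strongly connected if every ordered pair of distinct nodes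
is joined by a directed path. -/
def StronglyConnected (n : ℕ) (E : Fin n → Fin n → Prop) : Prop :=
  ∀ i j : Fin n, i ≠ j → Relation.TransGen E i j

/-!
On consecutive intervals of length `τ` a solution of `y'(t) = A y(t - τ)` is iterated by a bounded
operator on `C([0, 1], E)` whose nonzero spectrum consists of the `e^{sτ}` with `s e^{sτ}` an
eigenvalue of `A`. By Gelfand's formula all solutions decay as soon as no such `s` lies in the
closed right half-plane.

Total mass is conserved and the uniform state is an equilibrium of `M(ε)`, so average consensus
amounts to decay on the vectors of total mass zero. There the nonzero eigenvalues of `M(0)` lie in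
the Gershgorin disc `|μ + δ| ≤ δ`, and the bound on `τ` makes them stable. If stability failed for
arbitrarily small `ε > 0`, a compactness argument would give unstable roots `s` tending to `0`, with
eigenvectors tending to the null vector `v₀` of `M(0)` of mass zero. But then
`s / ε → (w · M'(0) v₀) / (w · v₀)` for a left null vector `w` of `M(0)`, and the positive null
vectors of the two Laplacians show that this ratio is negative.
-/

open scoped Topology

section GelfandDecay

theorem tendsto_pow_zero_of_spectrum_norm_lt_one {𝔸 : Type*} [NormedRing 𝔸] [NormedAlgebra ℂ 𝔸]
    [CompleteSpace 𝔸] {a : 𝔸} (ha : ∀ z ∈ spectrum ℂ a, ‖z‖ < 1) :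
    Tendsto (fun n : ℕ => a ^ n) atTop (𝓝 0) := by
  nontriviality 𝔸
  have hrad : spectralRadius ℂ a < 1 :=
    spectrum.spectralRadius_lt_of_forall_lt a (r := 1) fun z hz => ha z hz
  obtain ⟨q, hq, hq1⟩ := ENNReal.lt_iff_exists_nnreal_btwn.mp hrad
  have hroot :=
    (spectrum.pow_nnnorm_pow_one_div_tendsto_nhds_spectralRadius a).eventually_lt_const hq
  refine squeeze_zero_norm' (a := fun n : ℕ => (q : ℝ) ^ n) ?_
    (tendsto_pow_atTop_nhds_zero_of_lt_one q.2 (by exact_mod_cast hq1))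
  filter_upwards [hroot, eventually_gt_atTop 0] with n hn hn0
  have hpow : (‖a ^ n‖₊ : ENNReal) < (q : ENNReal) ^ n := by
    rw [← ENNReal.rpow_natCast]
    exact (ENNReal.rpow_inv_lt_iff (by positivity)).mp (by simpa only [one_div] using hn)
  exact_mod_cast hpow.le

theorem tendsto_pow_apply_zero_of_spectrum_norm_lt_one {X : Type*} [NormedAddCommGroup X]
    [NormedSpace ℂ X] [CompleteSpace X] {T : X →L[ℂ] X} (hT : ∀ z ∈ spectrum ℂ T, ‖z‖ < 1) (x : X) :
    Tendsto (fun n : ℕ => (T ^ n) x) atTop (𝓝 0) := by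
  have hpow : Tendsto (fun n : ℕ => T ^ n) atTop (𝓝 0) :=
    tendsto_pow_zero_of_spectrum_norm_lt_one hT
  exact ((ContinuousLinearMap.apply ℂ X x).continuous.tendsto' 0 0 (map_zero _)).comp hpow

end GelfandDecay

section LinearODE

variable {E : Type*} [NormedAddCommGroup E] [NormedSpace ℂ E] [CompleteSpace E]

theorem hasDerivAt_exp_smul_apply (a : E →L[ℂ] E) {g : ℝ → E} {g' : E} {t : ℝ}
    (hg : HasDerivAt g g' t) :
    HasDerivAt (fun u : ℝ => NormedSpace.exp (u • a) (g u))
      (a (NormedSpace.exp (t • a) (g t)) + NormedSpace.exp (t • a) g') t :=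
  ((ContinuousLinearMap.restrictScalarsL ℂ E E ℝ ℝ).hasFDerivAt.comp_hasDerivAt t
    (hasDerivAt_exp_smul_const' a t)).clm_apply hg

theorem eq_exp_smul_apply_of_hasDerivAt {a : E →L[ℂ] E} {F : ℝ → E} {T : ℝ}
    (hF : ∀ t ∈ Set.Icc 0 T, HasDerivAt F (a (F t)) t) {t : ℝ} (ht : t ∈ Set.Icc 0 T) :
    F t = NormedSpace.exp (t • a) (F 0) := by
  have hexp (u : ℝ) : HasDerivAt (fun u : ℝ => NormedSpace.exp (u • a) (F 0))
      (a (NormedSpace.exp (u • a) (F 0))) u :=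
    (hasDerivAt_exp_smul_apply a (hasDerivAt_const u (F 0))).congr_deriv (by simp)
  exact ODE_solution_unique (v := fun _ => a) (fun _ => a.lipschitz)
    (fun t ht => (hF t ht).continuousAt.continuousWithinAt)
    (fun t ht => (hF t (Set.Ico_subset_Icc_self ht)).hasDerivWithinAt)
    (fun t _ => (hexp t).continuousAt.continuousWithinAt)
    (fun t _ => (hexp t).hasDerivWithinAt) (by simp) ht

theorem exists_hasDerivAt_apply_add (a : E →L[ℂ] E) {h : ℝ → E} (hh : Continuous h) :
    ∃ G : ℝ → E, G 0 = 0 ∧ ∀ t, HasDerivAt G (a (G t) + h t) t := by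
  let _ : NormedAlgebra ℚ (E →L[ℂ] E) := .restrictScalars ℚ ℂ _
  have hcont : Continuous fun u : ℝ => NormedSpace.exp (-u • a) (h u) := by fun_prop
  refine ⟨fun t => NormedSpace.exp (t • a) (∫ u in (0 : ℝ)..t, NormedSpace.exp (-u • a) (h u)),
    by simp, fun t => ?_⟩
  have hinv : NormedSpace.exp (t • a) * NormedSpace.exp (-t • a) = 1 := by
    rw [neg_smul, ← NormedSpace.exp_add_of_commute (Commute.refl _).neg_right,
      add_neg_cancel, NormedSpace.exp_zero]
  refine (hasDerivAt_exp_smul_apply a (hcont.integral_hasStrictDerivAt 0 t).hasDerivAt).congr_deriv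
    (congrArg _ ?_)
  rw [← mul_apply_eq_comp, hinv, one_apply_eq_self]

end LinearODE

section DelayStep

variable {E : Type*} [NormedAddCommGroup E] [NormedSpace ℂ E]

/-- Integration from `0`, as a bounded operator on the continuous functions on `[0, 1]`. -/
def primitiveCLM : C(unitInterval, E) →L[ℂ] C(unitInterval, E) :=
  LinearMap.mkContinuous
    { toFun φ :=
        { toFun θ := ∫ u in (0 : ℝ)..θ, Set.IccExtend zero_le_one φ u
          continuous_toFun := (intervalIntegral.continuous_primitive
            (fun _ _ => φ.continuous.Icc_extend'.intervalIntegrable _ _) 0).comp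
            continuous_subtype_val }
      map_add' φ ψ := ContinuousMap.ext fun _ =>
        intervalIntegral.integral_add (φ.continuous.Icc_extend'.intervalIntegrable _ _)
          (ψ.continuous.Icc_extend'.intervalIntegrable _ _)
      map_smul' c _ := ContinuousMap.ext fun _ => intervalIntegral.integral_smul c _ }
    1 fun φ => by
      refine (ContinuousMap.norm_le _ (by positivity)).mpr fun θ => ?_
      refine (intervalIntegral.norm_integral_le_of_norm_le_const
        fun u _ => φ.norm_coe_le_norm _).trans ?_
      rw [sub_zero, abs_of_nonneg θ.2.1, one_mul]
      exact mul_le_of_le_one_right (norm_nonneg φ) θ.2.2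

/-- The method-of-steps operator of the unit-delay equation `y'(t) = A y(t - 1)`: it sends the
segment of a solution over `[k - 1, k]` to its segment over `[k, k + 1]`, both parametrised by
`[0, 1]`. -/
def delayStep (A : E →L[ℂ] E) : C(unitInterval, E) →L[ℂ] C(unitInterval, E) where
  toFun φ := .const _ (φ 1) + (A : C(E, E)).comp (primitiveCLM φ)
  map_add' φ ψ := by ext; simp [add_add_add_comm]
  map_smul' c φ := by ext; simp
  cont := by fun_prop

theorem delayStep_apply (A : E →L[ℂ] E) (φ : C(unitInterval, E)) (θ : unitInterval) :
    delayStep A φ θ = φ 1 + A (∫ u in (0 : ℝ)..θ, Set.IccExtend zero_le_one φ u) :=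
  rfl

variable [CompleteSpace E]

theorem delayStep_apply_of_hasDerivAt {A : E →L[ℂ] E} {φ : C(unitInterval, E)} {F : ℝ → E}
    (hFc : ContinuousOn F (Set.Icc 0 1)) (hF0 : F 0 = φ 1)
    (hF : ∀ t ∈ Set.Ioo (0 : ℝ) 1, HasDerivAt F (A (Set.IccExtend zero_le_one φ t)) t)
    (θ : unitInterval) : delayStep A φ θ = F θ := by
  have hφ : Continuous (Set.IccExtend (zero_le_one' ℝ) φ) := φ.continuous.Icc_extend'
  rw [delayStep_apply, ← A.intervalIntegral_comp_comm (hφ.intervalIntegrable _ _),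
    intervalIntegral.integral_eq_sub_of_hasDerivAt_of_le θ.2.1
      (hFc.mono (Set.Icc_subset_Icc_right θ.2.2))
      (fun t ht => hF t ⟨ht.1, ht.2.trans_le θ.2.2⟩)
      ((A.continuous.comp hφ).intervalIntegrable _ _), ← hF0, add_sub_cancel]

theorem eq_zero_of_delayStep_eq_smul {A : E →L[ℂ] E} {z : ℂ} (hz : z ≠ 0)
    (hA : IsUnit (algebraMap ℂ (E →L[ℂ] E) z - NormedSpace.exp (z⁻¹ • A)))
    {φ : C(unitInterval, E)} (hφ : delayStep A φ = z • φ) : φ = 0 := by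
  set φe : ℝ → E := Set.IccExtend zero_le_one φ
  -- `F = z φ` solves `F' = z⁻¹ A F`, so it is the flow of `z⁻¹ A` through `φ 1`.
  let F : ℝ → E := fun t => φ 1 + A (∫ u in (0 : ℝ)..t, φe u)
  have hFφ (θ : unitInterval) : F θ = z • φ θ := congrArg (· θ) hφ
  have hF : ∀ t ∈ Set.Icc (0 : ℝ) 1, HasDerivAt F ((z⁻¹ • A) (F t)) t := fun t ht => by
    have hprim : HasDerivAt (fun t => ∫ u in (0 : ℝ)..t, φe u) (φe t) t :=
      (φ.continuous.Icc_extend'.integral_hasStrictDerivAt 0 t).hasDerivAt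
    refine (((A.restrictScalars ℝ).hasFDerivAt.comp_hasDerivAt t hprim).const_add
      (φ 1)).congr_deriv ?_
    have hφe : φe t = z⁻¹ • F t := by
      rw [show φe t = φ ⟨t, ht⟩ from Set.IccExtend_of_mem _ _ ht,
        hFφ ⟨t, ht⟩, inv_smul_smul₀ hz]
    simp [hφe]
  have hflow (t : ℝ) (ht : t ∈ Set.Icc (0 : ℝ) 1) : F t = NormedSpace.exp (t • z⁻¹ • A) (φ 1) :=
    (eq_exp_smul_apply_of_hasDerivAt hF ht).trans (by simp [F])
  have hend : φ 1 = 0 := by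
    have h1 : (algebraMap ℂ (E →L[ℂ] E) z - NormedSpace.exp (z⁻¹ • A)) (φ 1) = 0 := by
      have := (hflow 1 (by simp)).symm.trans (hFφ 1)
      rw [one_smul] at this
      simp [this, Algebra.algebraMap_eq_smul_one]
    exact (ContinuousLinearMap.isUnit_iff_bijective.mp hA).1 (h1.trans (map_zero _).symm)
  ext θ
  have h0 : z • φ θ = 0 := by rw [← hFφ, hflow θ θ.2, hend, map_zero]
  simpa [hz] using h0

theorem exists_smul_sub_delayStep_eq {A : E →L[ℂ] E} {z : ℂ} (hz : z ≠ 0)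
    (hA : IsUnit (algebraMap ℂ (E →L[ℂ] E) z - NormedSpace.exp (z⁻¹ • A)))
    (g : C(unitInterval, E)) : ∃ φ, z • φ - delayStep A φ = g := by
  set ge : ℝ → E := Set.IccExtend zero_le_one g
  have hge : Continuous ge := g.continuous.Icc_extend'
  obtain ⟨G, hG0, hG⟩ := exists_hasDerivAt_apply_add (z⁻¹ • A)
    (h := fun t => (z⁻¹ • A) (ge t)) (by fun_prop)
  obtain ⟨c, hc⟩ := (ContinuousLinearMap.isUnit_iff_bijective.mp hA).2 (G 1 + ge 1)
  let F : ℝ → E := fun t => NormedSpace.exp (t • z⁻¹ • A) c + G t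
  have hF (t : ℝ) : HasDerivAt F (A (z⁻¹ • (F t + ge t))) t := by
    have hexp := hasDerivAt_exp_smul_apply (z⁻¹ • A) (hasDerivAt_const t c)
    refine (hexp.add (hG t)).congr_deriv ?_
    simp [F, add_assoc]
  have hFcont : Continuous F := continuous_iff_continuousAt.mpr fun t => (hF t).continuousAt
  have hF1 : F 1 + ge 1 = z • c := by
    have : z • c - NormedSpace.exp (z⁻¹ • A) c = G 1 + ge 1 := by
      simpa [Algebra.algebraMap_eq_smul_one] using hc
    simp only [F, one_smul, add_assoc, ← this, add_sub_cancel]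
  let φ : C(unitInterval, E) := ⟨fun θ => z⁻¹ • (F θ + ge θ), by fun_prop⟩
  have hstep (θ : unitInterval) : delayStep A φ θ = F θ := by
    refine delayStep_apply_of_hasDerivAt hFcont.continuousOn ?_ (fun t ht => ?_) θ
    · simpa [F, φ, ge, hG0] using (inv_smul_eq_iff₀ hz).mpr hF1 |>.symm
    · rw [Set.IccExtend_of_mem _ _ (Set.Ioo_subset_Icc_self ht)]
      exact hF t
  refine ⟨φ, ContinuousMap.ext fun θ => ?_⟩
  simp only [ContinuousMap.sub_apply, ContinuousMap.smul_apply, hstep]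
  simp [φ, ge, hz]

theorem isUnit_algebraMap_sub_delayStep {A : E →L[ℂ] E} {z : ℂ} (hz : z ≠ 0)
    (hA : IsUnit (algebraMap ℂ (E →L[ℂ] E) z - NormedSpace.exp (z⁻¹ • A))) :
    IsUnit (algebraMap ℂ (C(unitInterval, E) →L[ℂ] C(unitInterval, E)) z - delayStep A) := by
  have happly (φ : C(unitInterval, E)) :
      (algebraMap ℂ (C(unitInterval, E) →L[ℂ] C(unitInterval, E)) z - delayStep A) φ =
        z • φ - delayStep A φ := by
    simp [Algebra.algebraMap_eq_smul_one]
  refine ContinuousLinearMap.isUnit_iff_bijective.mpr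
    ⟨(injective_iff_map_eq_zero _).mpr fun φ hφ => ?_, fun g => ?_⟩
  · exact eq_zero_of_delayStep_eq_smul hz hA (sub_eq_zero.mp ((happly φ).symm.trans hφ)).symm
  · simpa only [happly] using exists_smul_sub_delayStep_eq hz hA g

end DelayStep

section DelayEquation

/-- `y` solves the delay equation `y'(t) = A (y (t - τ))` for `t > 0`, with a continuous initial
history on `[-τ, 0]`; no differentiability is required at `t = 0`. -/
structure IsDelaySolution {E : Type*} [NormedAddCommGroup E] [NormedSpace ℝ E]
    (A : E → E) (τ : ℝ) (y : ℝ → E) : Prop where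
  continuousOn : ContinuousOn y (Set.Ici (-τ))
  hasDerivAt : ∀ t, 0 < t → HasDerivAt y (A (y (t - τ))) t

/-- The characteristic equation `s = μ e^{-sτ}` of `y'(t) = μ y(t - τ)` has no root in the closed
right half-plane. -/
def IsDelayStable (τ : ℝ) (μ : ℂ) : Prop :=
  ∀ s : ℂ, 0 ≤ s.re → s * exp (s * τ) ≠ μ

theorem norm_le_norm_mul_exp {τ : ℝ} (hτ : 0 ≤ τ) {s : ℂ} (hs : 0 ≤ s.re) :
    ‖s‖ ≤ ‖s * exp (s * τ)‖ := by
  rw [norm_mul, norm_exp, re_mul_ofReal]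
  exact le_mul_of_one_le_right (norm_nonneg s) (Real.one_le_exp (mul_nonneg hs hτ))

theorem IsDelaySolution.map {E F : Type*} [NormedAddCommGroup E] [NormedSpace ℝ E]
    [NormedAddCommGroup F] [NormedSpace ℝ F] {A : E → E} {B : F → F} {τ : ℝ} {y : ℝ → E}
    (hy : IsDelaySolution A τ y) (L : E →L[ℝ] F) (hL : ∀ v, L (A v) = B (L v)) :
    IsDelaySolution B τ (fun t => L (y t)) where
  continuousOn := L.continuous.comp_continuousOn hy.continuousOn
  hasDerivAt t ht := (L.hasFDerivAt.comp_hasDerivAt t (hy.hasDerivAt t ht)).congr_deriv (hL _)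

theorem IsDelaySolution.eq_apply_zero {E : Type*} [NormedAddCommGroup E] [NormedSpace ℝ E]
    [CompleteSpace E] {τ : ℝ} (hτ : 0 ≤ τ) {y : ℝ → E}
    (hy : IsDelaySolution (fun _ => 0) τ y) {t : ℝ} (ht : 0 ≤ t) : y t = y 0 := by
  have h := intervalIntegral.integral_eq_sub_of_hasDerivAt_of_le ht
    (hy.continuousOn.mono fun u hu => (neg_nonpos.mpr hτ).trans hu.1)
    (fun u hu => hy.hasDerivAt u hu.1) intervalIntegrable_const
  exact sub_eq_zero.mp (h.symm.trans intervalIntegral.integral_zero)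

variable {E : Type*} [NormedAddCommGroup E] [NormedSpace ℂ E]

/-- The segment of `y` over `[(k - 1)τ, kτ]`, parametrised by `[0, 1]`. -/
def delaySegment {τ : ℝ} (hτ : 0 ≤ τ) {y : ℝ → E} (hy : ContinuousOn y (Set.Ici (-τ))) (k : ℕ) :
    C(unitInterval, E) where
  toFun θ := y ((k + θ) * τ - τ)
  continuous_toFun := hy.comp_continuous (by fun_prop) fun θ => by
    have : 0 ≤ (k + θ : ℝ) * τ := mul_nonneg (add_nonneg k.cast_nonneg θ.2.1) hτ
    simpa using this

theorem IsDelaySolution.delayStep_delaySegment [CompleteSpace E] {A : E →L[ℂ] E} {τ : ℝ}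
    (hτ : 0 < τ) {y : ℝ → E} (hy : IsDelaySolution A τ y) (k : ℕ) :
    delayStep (τ • A) (delaySegment hτ.le hy.continuousOn k) =
      delaySegment hτ.le hy.continuousOn (k + 1) := by
  ext θ
  have hτk (t : ℝ) (ht : 0 ≤ t) : 0 ≤ ((k : ℝ) + t) * τ := by positivity
  refine (delayStep_apply_of_hasDerivAt (F := fun t => y ((k + t) * τ)) ?_ ?_ ?_ θ).trans ?_
  · exact hy.continuousOn.comp (by fun_prop)
      fun t ht => (neg_nonpos.mpr hτ.le).trans (hτk t ht.1)
  · simp [delaySegment, add_mul]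
  · intro t ht
    have hinner : HasDerivAt (fun t : ℝ => (k + t) * τ) τ t := by
      simpa using ((hasDerivAt_id t).const_add (k : ℝ)).mul_const τ
    have hpos : 0 < ((k : ℝ) + t) * τ := mul_pos (add_pos_of_nonneg_of_pos k.cast_nonneg ht.1) hτ
    refine ((hy.hasDerivAt _ hpos).scomp t hinner).congr_deriv ?_
    rw [Set.IccExtend_of_mem _ _ (Set.Ioo_subset_Icc_self ht)]
    rfl
  · simp only [delaySegment, ContinuousMap.coe_mk]
    congr 1
    push_cast
    ring

theorem IsDelaySolution.delayStep_pow_delaySegment [CompleteSpace E] {A : E →L[ℂ] E} {τ : ℝ}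
    (hτ : 0 < τ) {y : ℝ → E} (hy : IsDelaySolution A τ y) (k : ℕ) :
    (delayStep (τ • A) ^ k) (delaySegment hτ.le hy.continuousOn 0) =
      delaySegment hτ.le hy.continuousOn k := by
  induction k with
  | zero => rfl
  | succ k ih => rw [pow_succ', mul_apply_eq_comp, ih, hy.delayStep_delaySegment hτ]

theorem IsDelaySolution.tendsto_zero_of_spectrum [CompleteSpace E] {A : E →L[ℂ] E} {τ : ℝ}
    (hτ : 0 < τ) (hA : ∀ z ∈ spectrum ℂ (delayStep (τ • A)), ‖z‖ < 1) {y : ℝ → E}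
    (hy : IsDelaySolution A τ y) : Tendsto y atTop (𝓝 0) := by
  have hw : Tendsto (fun k => ‖delaySegment hτ.le hy.continuousOn k‖) atTop (𝓝 0) := by
    have hlim := tendsto_zero_iff_norm_tendsto_zero.mp
      (tendsto_pow_apply_zero_of_spectrum_norm_lt_one hA (delaySegment hτ.le hy.continuousOn 0))
    exact hlim.congr fun k => congrArg norm (hy.delayStep_pow_delaySegment hτ k)
  have hidx : Tendsto (fun t : ℝ => ⌊t / τ + 1⌋₊) atTop atTop :=
    tendsto_nat_floor_atTop.comp
      (tendsto_atTop_add_const_right _ _ (tendsto_id.atTop_div_const hτ))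
  refine squeeze_zero_norm' ?_ (hw.comp hidx)
  filter_upwards [eventually_ge_atTop 0] with t ht
  have hpos : 0 ≤ t / τ + 1 := by positivity
  refine le_of_eq_of_le ?_ ((delaySegment hτ.le hy.continuousOn _).norm_coe_le_norm
    ⟨t / τ + 1 - ⌊t / τ + 1⌋₊, sub_nonneg.mpr (Nat.floor_le hpos),
      sub_le_iff_le_add'.mpr (Nat.lt_floor_add_one _).le⟩)
  simp only [delaySegment, ContinuousMap.coe_mk, add_sub_cancel]
  congr 2
  field_simp
  ring

theorem exp_apply_of_apply_eq_smul [CompleteSpace E] {A : E →L[ℂ] E} {μ : ℂ} {v : E}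
    (hv : A v = μ • v) : NormedSpace.exp A v = exp μ • v := by
  have hF (t : ℝ) : HasDerivAt (fun u : ℝ => exp (u * μ) • v) (A (exp (t * μ) • v)) t := by
    have h : HasDerivAt (fun u : ℂ => exp (u * μ)) (exp (t * μ) * μ) t := by
      simpa using ((hasDerivAt_id (t : ℂ)).mul_const μ).cexp
    exact (h.comp_ofReal.smul_const v).congr_deriv (by rw [map_smul, hv, smul_smul])
  have h := eq_exp_smul_apply_of_hasDerivAt (T := 1) (fun t _ => hF t) (t := 1) (by simp)
  simpa using h.symm

section FiniteDimensional

variable [FiniteDimensional ℂ E]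

theorem exists_eigenvector_of_not_isUnit_sub_exp {A : E →L[ℂ] E} {z : ℂ}
    (hz : ¬ IsUnit (algebraMap ℂ (E →L[ℂ] E) z - NormedSpace.exp A)) :
    ∃ μ : ℂ, ∃ v : E, v ≠ 0 ∧ A v = μ • v ∧ exp μ = z := by
  have := FiniteDimensional.complete ℂ E
  let K : Submodule ℂ E := ((algebraMap ℂ (E →L[ℂ] E) z - NormedSpace.exp A)).ker
  have hK : Nontrivial K := by
    refine Submodule.nontrivial_iff_ne_bot.mpr fun hbot => hz ?_
    have hinj := LinearMap.ker_eq_bot.mp hbot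
    exact ContinuousLinearMap.isUnit_iff_bijective.mpr
      ⟨hinj, LinearMap.surjective_of_injective hinj⟩
  have hmem (v : E) : v ∈ K ↔ NormedSpace.exp A v = z • v := by
    rw [eq_comm (a := NormedSpace.exp A v), ← sub_eq_zero]
    simp [K, Algebra.algebraMap_eq_smul_one]
  have hinv : ∀ v ∈ K, A v ∈ K := fun v hv => by
    have hcomm : NormedSpace.exp A * A = A * NormedSpace.exp A :=
      ((Commute.refl A).exp_left).eq
    rw [hmem, ← mul_apply_eq_comp, hcomm, mul_apply_eq_comp, (hmem v).mp hv, map_smul]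
  obtain ⟨μ, hμ⟩ := Module.End.exists_eigenvalue ((A : E →ₗ[ℂ] E).restrict hinv)
  obtain ⟨⟨v, hvK⟩, hv, hv0⟩ := hμ.exists_hasEigenvector
  have hAv : A v = μ • v := congrArg Subtype.val (Module.End.mem_eigenspace_iff.mp hv)
  refine ⟨μ, v, by simpa using hv0, hAv, ?_⟩
  exact smul_left_injective ℂ (by simpa using hv0)
    ((exp_apply_of_apply_eq_smul hAv).symm.trans ((hmem v).mp hvK))

theorem norm_lt_one_of_mem_spectrum_delayStep {A : E →L[ℂ] E} {τ : ℝ}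
    (hτ : 0 < τ) (hA : ∀ μ : ℂ, ∀ v ≠ 0, A v = μ • v → IsDelayStable τ μ) {z : ℂ}
    (hz : z ∈ spectrum ℂ (delayStep (τ • A))) : ‖z‖ < 1 := by
  have := FiniteDimensional.complete ℂ E
  by_contra! hz1
  have hz0 : z ≠ 0 := norm_pos_iff.mp (one_pos.trans_le hz1)
  obtain ⟨ν, v, hv, hAv, hν⟩ := exists_eigenvector_of_not_isUnit_sub_exp
    fun h => hz (isUnit_algebraMap_sub_delayStep hz0 h)
  have hτ0 : (τ : ℂ) ≠ 0 := by exact_mod_cast hτ.ne'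
  have heig : A v = (ν / τ * z) • v := by
    have h : (z⁻¹ * τ) • A v = ν • v := by
      simpa [smul_smul, ← Complex.coe_smul] using hAv
    rw [← inv_smul_smul₀ (mul_ne_zero (inv_ne_zero hz0) hτ0) (A v), h, smul_smul]
    congr 1
    field_simp
  have hre : 0 ≤ (ν / τ).re := by
    rw [div_ofReal_re]
    have : ‖z‖ = Real.exp ν.re := by rw [← hν, norm_exp]
    rw [this, Real.one_le_exp_iff] at hz1
    positivity
  exact hA _ v hv heig (ν / τ) hre (by rw [div_mul_cancel₀ _ hτ0, hν])

theorem IsDelaySolution.tendsto_zero {A : E →L[ℂ] E} {τ : ℝ} (hτ : 0 < τ)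
    (hA : ∀ μ : ℂ, ∀ v ≠ 0, A v = μ • v → IsDelayStable τ μ) {y : ℝ → E}
    (hy : IsDelaySolution A τ y) : Tendsto y atTop (𝓝 0) :=
  have := FiniteDimensional.complete ℂ E
  hy.tendsto_zero_of_spectrum hτ fun _ => norm_lt_one_of_mem_spectrum_delayStep hτ hA

theorem IsDelaySolution.tendsto_smul_of_conserved {A : E →L[ℂ] E} {τ : ℝ} (hτ : 0 < τ)
    {ℓ : E →L[ℂ] ℂ} (hℓ : ∀ v, ℓ (A v) = 0) {b : E} (hb : A b = 0) (hℓb : ℓ b = 1)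
    (hA : ∀ μ : ℂ, ∀ v ≠ 0, ℓ v = 0 → A v = μ • v → IsDelayStable τ μ) {y : ℝ → E}
    (hy : IsDelaySolution A τ y) : Tendsto y atTop (𝓝 (ℓ (y 0) • b)) := by
  let W := ℓ.ker
  let AW : W →L[ℂ] W := (A.comp W.subtypeL).codRestrict W fun v => hℓ v
  let π : E →L[ℂ] W := (.id ℂ E - ℓ.smulRight b).codRestrict W fun v => by simp [W, hℓb]
  have hu : IsDelaySolution AW τ fun t => π (y t) :=
    hy.map (π.restrictScalars ℝ) fun v => Subtype.ext <| by
      change A v - ℓ (A v) • b = A (v - ℓ v • b)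
      simp [hℓ, hb]
  have hu0 : Tendsto (fun t => (π (y t) : E)) atTop (𝓝 0) := by
    refine (W.subtypeL.continuous.tendsto' 0 0 rfl).comp (hu.tendsto_zero hτ fun μ v hv hμ => ?_)
    exact hA μ v (by simpa using hv) v.2 (congrArg Subtype.val hμ)
  have hℓy : (fun t => ℓ (y t)) =ᶠ[atTop] fun _ => ℓ (y 0) := by
    filter_upwards [eventually_ge_atTop 0] with t ht
    exact (hy.map (B := fun _ => 0) (ℓ.restrictScalars ℝ) hℓ).eq_apply_zero hτ.le ht
  have hlim := hu0.add ((tendsto_congr' hℓy).mpr tendsto_const_nhds |>.smul_const b)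
  simpa [π] using hlim

end FiniteDimensional

end DelayEquation

section Perturbation

variable {E : Type*} [NormedAddCommGroup E] [NormedSpace ℂ E]

/-- First-order perturbation theory for a root `s` bifurcating from `0`: test the perturbed
eigenvalue equation against a left null vector `f` of `A`. -/
theorem tendsto_div_of_perturbed_eigenvector {A B : E →L[ℂ] E} {f : E →L[ℂ] ℂ}
    (hfA : ∀ v, f (A v) = 0) {τ : ℝ} {ε : ℕ → ℝ} (hε : ∀ k, ε k ≠ 0) {s : ℕ → ℂ} {v : ℕ → E}
    {v' : E} (hs : Tendsto s atTop (𝓝 0)) (hv : Tendsto v atTop (𝓝 v')) (hfv' : f v' ≠ 0)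
    (heig : ∀ k, (A + (ε k : ℂ) • B) (v k) = (s k * exp (s k * τ)) • v k) :
    Tendsto (fun k => s k / ε k) atTop (𝓝 (f (B v') / f v')) := by
  have hf : Tendsto (fun k => f (v k)) atTop (𝓝 (f v')) := (f.continuous.tendsto v').comp hv
  have hfB : Tendsto (fun k => f (B (v k))) atTop (𝓝 (f (B v'))) :=
    ((f.comp B).continuous.tendsto v').comp hv
  have hexp : Tendsto (fun k => exp (s k * τ)) atTop (𝓝 1) := by
    simpa using (hs.mul_const (τ : ℂ)).cexp
  have hlim := (hfB.div hf hfv').div hexp one_ne_zero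
  rw [div_one] at hlim
  refine hlim.congr' ?_
  filter_upwards [hf.eventually_ne hfv'] with k hk
  have hfk : ε k * f (B (v k)) = s k * exp (s k * τ) * f (v k) := by
    simpa [hfA] using congrArg f (heig k)
  have hεk : (ε k : ℂ) ≠ 0 := by exact_mod_cast hε k
  simp only [Pi.div_apply]
  field_simp [exp_ne_zero]
  linear_combination hfk

variable [FiniteDimensional ℂ E]

theorem exists_tendsto_subseq_of_apply_eq_smul {A : E →L[ℂ] E} {M : ℕ → E →L[ℂ] E}
    (hM : Tendsto M atTop (𝓝 A)) {τ : ℝ} (hτ : 0 ≤ τ) {s : ℕ → ℂ} {v : ℕ → E}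
    (hs : ∀ k, 0 ≤ (s k).re) (hv : ∀ k, ‖v k‖ = 1)
    (heig : ∀ k, M k (v k) = (s k * exp (s k * τ)) • v k) :
    ∃ (s' : ℂ) (v' : E) (φ : ℕ → ℕ), StrictMono φ ∧ Tendsto (s ∘ φ) atTop (𝓝 s') ∧
      Tendsto (v ∘ φ) atTop (𝓝 v') ∧ 0 ≤ s'.re ∧ ‖v'‖ = 1 ∧ A v' = (s' * exp (s' * τ)) • v' := by
  have : ProperSpace E := FiniteDimensional.proper ℂ E
  obtain ⟨R, hR⟩ := (Metric.isBounded_range_of_tendsto M hM).exists_norm_le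
  have hsR (k : ℕ) : ‖s k‖ ≤ R := calc
    ‖s k‖ ≤ ‖s k * exp (s k * τ)‖ := norm_le_norm_mul_exp hτ (hs k)
    _ = ‖M k (v k)‖ := by rw [heig, norm_smul, hv, mul_one]
    _ ≤ ‖M k‖ := (M k).unit_le_opNorm _ (hv k).le
    _ ≤ R := hR _ (Set.mem_range_self k)
  have hbdd : ∀ k, (s k, v k) ∈ Metric.closedBall (0 : ℂ) R ×ˢ Metric.closedBall (0 : E) 1 :=
    fun k => by simpa using ⟨hsR k, (hv k).le⟩
  obtain ⟨⟨s', v'⟩, -, φ, hφ, hlim⟩ :=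
    ((isCompact_closedBall 0 R).prod (isCompact_closedBall 0 1)).tendsto_subseq hbdd
  have hs' : Tendsto (s ∘ φ) atTop (𝓝 s') := (continuous_fst.tendsto _).comp hlim
  have hv' : Tendsto (v ∘ φ) atTop (𝓝 v') := (continuous_snd.tendsto _).comp hlim
  refine ⟨s', v', φ, hφ, hs', hv', ?_, ?_, ?_⟩
  · exact ge_of_tendsto' ((continuous_re.tendsto s').comp hs') fun k => hs (φ k)
  · exact tendsto_nhds_unique hv'.norm (tendsto_const_nhds.congr fun k => (hv (φ k)).symm)
  · have hright : Tendsto (fun k => (s (φ k) * exp (s (φ k) * τ)) • v (φ k)) atTop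
        (𝓝 ((s' * exp (s' * τ)) • v')) :=
      (hs'.mul (hs'.mul_const _).cexp).smul hv'
    have hleft : Tendsto (fun k => M (φ k) (v (φ k))) atTop (𝓝 (A v')) :=
      ((continuous_fst.clm_apply continuous_snd).tendsto (A, v')).comp
        ((hM.comp hφ.tendsto_atTop).prodMk_nhds hv')
    exact tendsto_nhds_unique hleft <| hright.congr fun k => (heig (φ k)).symm

theorem eventually_isDelayStable_add_smul {A B : E →L[ℂ] E} {τ : ℝ} (hτ : 0 ≤ τ)
    (hA : ∀ μ ≠ 0, ∀ v ≠ 0, A v = μ • v → IsDelayStable τ μ)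
    {ℓ : E →L[ℂ] ℂ} {v₀ : E} (hker : ∀ v, A v = 0 → ℓ v = 0 → ∃ c : ℂ, v = c • v₀)
    {f : E →L[ℂ] ℂ} (hfA : ∀ v, f (A v) = 0) (hfB : (f (B v₀) / f v₀).re < 0) :
    ∀ᶠ ε : ℝ in 𝓝[>] 0, ∀ μ : ℂ, ∀ v ≠ 0, ℓ v = 0 → (A + (ε : ℂ) • B) v = μ • v →
      IsDelayStable τ μ := by
  by_contra hcon
  have hfreq : ∃ᶠ ε : ℝ in 𝓝[>] 0, 0 < ε ∧ ∃ (s : ℂ) (v : E), 0 ≤ s.re ∧ ‖v‖ = 1 ∧ ℓ v = 0 ∧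
      (A + (ε : ℂ) • B) v = (s * exp (s * τ)) • v := by
    refine ((not_eventually.mp hcon).and_eventually self_mem_nhdsWithin).mono fun ε ⟨h, hε⟩ => ?_
    simp only [IsDelayStable, not_forall, not_not] at h
    obtain ⟨_, v, hv, hℓ, hμ, s, hs, rfl⟩ := h
    refine ⟨hε, s, (‖v‖⁻¹ : ℂ) • v, hs, by simp [norm_smul, hv], by simp [hℓ], ?_⟩
    rw [map_smul, hμ, smul_comm]
  obtain ⟨ε, hε, hseq⟩ := exists_seq_forall_of_frequently hfreq
  choose hεpos s v hs hv hℓ heig using hseq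
  have hM : Tendsto (fun k => A + (ε k : ℂ) • B) atTop (𝓝 A) := by
    have hε0 : Tendsto (fun k => (ε k : ℂ)) atTop (𝓝 (0 : ℝ)) :=
      (continuous_ofReal.tendsto 0).comp (tendsto_nhdsWithin_iff.mp hε).1
    simpa using (hε0.smul_const B).const_add A
  obtain ⟨s', v', φ, -, hs', hv', hs're, hv'1, heig'⟩ :=
    exists_tendsto_subseq_of_apply_eq_smul hM hτ hs hv heig
  have hv'0 : v' ≠ 0 := norm_pos_iff.mp (hv'1 ▸ one_pos)
  have hs'0 : s' = 0 := by
    by_contra hne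
    exact hA _ (mul_ne_zero hne (exp_ne_zero _)) v' hv'0 heig' s' hs're rfl
  have hℓ' : ℓ v' = 0 := tendsto_nhds_unique ((ℓ.continuous.tendsto v').comp hv')
    (tendsto_const_nhds.congr fun k => (hℓ (φ k)).symm)
  obtain ⟨c, rfl⟩ := hker v' (by simpa [hs'0] using heig') hℓ'
  have hc : c ≠ 0 := fun h => hv'0 (by simp [h])
  have hfv₀ : f v₀ ≠ 0 := fun h => by simp [h] at hfB
  have hlim := tendsto_div_of_perturbed_eigenvector hfA (fun k => (hεpos (φ k)).ne') (hs'0 ▸ hs')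
    hv' (by simp [hc, hfv₀]) fun k => heig (φ k)
  have hre : 0 ≤ (f (B (c • v₀)) / f (c • v₀)).re :=
    ge_of_tendsto' ((continuous_re.tendsto _).comp hlim) fun k => by
      simpa using div_nonneg (hs (φ k)) (hεpos (φ k)).le
  rw [map_smul, map_smul, map_smul, smul_eq_mul, smul_eq_mul, mul_div_mul_left _ _ hc] at hre
  exact hfB.not_ge hre

end Perturbation

section SectorCriterion

theorem mul_cos_add_mul_sin_neg_of_lt_arctan {r δ q : ℝ} (hδ : 0 < δ) (hq0 : 0 ≤ q)
    (hq : q < Real.arctan (-r / δ)) : r * Real.cos q + δ * Real.sin q < 0 := by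
  have hqπ : q < Real.pi / 2 := hq.trans (Real.arctan_lt_pi_div_two _)
  have hcos : 0 < Real.cos q := Real.cos_pos_of_mem_Ioo ⟨by linarith [Real.pi_pos], hqπ⟩
  have htan : Real.tan q < -r / δ := by
    simpa using Real.tan_lt_tan_of_lt_of_lt_pi_div_two (by linarith)
      (Real.arctan_lt_pi_div_two (-r / δ)) hq
  rw [Real.tan_eq_sin_div_cos, div_lt_div_iff₀ hcos hδ] at htan
  linarith

theorem re_mul_exp_neg (μ w : ℂ) : (μ * exp (-w)).re =
    Real.exp (-w.re) * (μ.re * Real.cos w.im + μ.im * Real.sin w.im) := by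
  simp only [mul_re, exp_re, exp_im, neg_re, neg_im, Real.cos_neg, Real.sin_neg]
  ring

/-- On a root `s` in the closed right half-plane the phase satisfies `|Im s| τ ≤ ‖μ‖ τ`, so a small
delay cannot rotate `μ` out of the left half-plane. -/
theorem isDelayStable_of_re_le_of_abs_im_le {δ r τ : ℝ} {μ : ℂ} (hδ : 0 < δ) (hτ0 : 0 ≤ τ)
    (hτ : τ < 1 / (2 * δ) * Real.arctan (-r / δ)) (hre : μ.re ≤ r) (him : |μ.im| ≤ δ)
    (hnorm : ‖μ‖ ≤ 2 * δ) : IsDelayStable τ μ := by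
  intro s hs heq
  have hroot : s = μ * exp (-(s * τ)) := by
    rw [← heq, mul_assoc, ← exp_add, add_neg_cancel, exp_zero, mul_one]
  have hsnorm : ‖s‖ ≤ 2 * δ := (norm_le_norm_mul_exp hτ0 hs).trans (heq ▸ hnorm)
  set q := |s.im * τ|
  have hq : q < Real.arctan (-r / δ) := calc
    q = |s.im| * τ := by simp only [q, abs_mul, abs_of_nonneg hτ0]
    _ ≤ 2 * δ * τ := mul_le_mul_of_nonneg_right ((abs_im_le_norm s).trans hsnorm) hτ0
    _ < Real.arctan (-r / δ) := by
      rwa [one_div, inv_mul_eq_div, lt_div_iff₀' (by positivity)] at hτ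
  have hqπ : q < Real.pi / 2 := hq.trans (Real.arctan_lt_pi_div_two _)
  have hcos : 0 ≤ Real.cos q :=
    Real.cos_nonneg_of_mem_Icc ⟨by linarith [abs_nonneg (s.im * τ)], hqπ.le⟩
  have hsin : μ.im * Real.sin (s.im * τ) ≤ δ * Real.sin q := by
    rw [← Real.abs_sin_eq_sin_abs_of_abs_le_pi (by linarith [Real.pi_pos])]
    exact (le_abs_self _).trans
      ((abs_mul _ _).trans_le (mul_le_mul_of_nonneg_right him (abs_nonneg _)))
  have hneg : μ.re * Real.cos (s.im * τ) + μ.im * Real.sin (s.im * τ) < 0 := calc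
    _ ≤ r * Real.cos q + δ * Real.sin q := by
      rw [← Real.cos_abs]
      exact add_le_add (mul_le_mul_of_nonneg_right hre hcos) hsin
    _ < 0 := mul_cos_add_mul_sin_neg_of_lt_arctan hδ (abs_nonneg _) hq
  have hsre := congrArg re hroot
  rw [re_mul_exp_neg, im_mul_ofReal] at hsre
  exact hs.not_gt (hsre ▸ mul_neg_of_pos_of_neg (Real.exp_pos _) hneg)

end SectorCriterion

section RealMatrix

variable {ι : Type*}

/-- The inclusion of the real vectors into the complex ones. -/
def ofRealPiCLM : (ι → ℝ) →L[ℝ] (ι → ℂ) :=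
  .pi fun i => ofRealCLM.comp (.proj i)

theorem ofRealPiCLM_apply (x : ι → ℝ) : ofRealPiCLM x = ofRealHom ∘ x := rfl

variable [Fintype ι]

/-- A real matrix acting on complex vectors. -/
def complexMulVecCLM (M : Matrix ι ι ℝ) : (ι → ℂ) →L[ℂ] (ι → ℂ) :=
  (M.map ofReal).mulVecLin.toContinuousLinearMap

/-- The pairing of complex vectors with a real vector. -/
def complexDotProductCLM (u : ι → ℝ) : (ι → ℂ) →L[ℂ] ℂ :=
  ∑ i, (u i : ℂ) • ContinuousLinearMap.proj i

theorem complexMulVecCLM_apply (M : Matrix ι ι ℝ) (v : ι → ℂ) :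
    complexMulVecCLM M v = M.map ofRealHom *ᵥ v := rfl

theorem complexDotProductCLM_apply (u : ι → ℝ) (v : ι → ℂ) :
    complexDotProductCLM u v = (ofRealHom ∘ u) ⬝ᵥ v := by
  simp [complexDotProductCLM, dotProduct]

theorem complexMulVecCLM_ofRealPiCLM (M : Matrix ι ι ℝ) (x : ι → ℝ) :
    complexMulVecCLM M (ofRealPiCLM x) = ofRealPiCLM (M *ᵥ x) :=
  funext fun i => (RingHom.map_mulVec ofRealHom M x i).symm

theorem complexDotProductCLM_ofRealPiCLM (u x : ι → ℝ) :
    complexDotProductCLM u (ofRealPiCLM x) = (u ⬝ᵥ x : ℝ) := by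
  rw [complexDotProductCLM_apply]
  exact (RingHom.map_dotProduct ofRealHom u x).symm

theorem complexMulVecCLM_add_smul (M N : Matrix ι ι ℝ) (ε : ℝ) :
    complexMulVecCLM (M + ε • N) = complexMulVecCLM M + (ε : ℂ) • complexMulVecCLM N := by
  ext v i
  simp [complexMulVecCLM, Matrix.map_add, Matrix.map_smul]

theorem complexDotProductCLM_complexMulVecCLM {M : Matrix ι ι ℝ} {u : ι → ℝ} (hu : u ᵥ* M = 0)
    (v : ι → ℂ) : complexDotProductCLM u (complexMulVecCLM M v) = 0 := by
  have h : (ofRealHom ∘ u) ᵥ* M.map ofRealHom = 0 :=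
    funext fun i => (RingHom.map_vecMul ofRealHom M u i).symm.trans (by simp [hu])
  rw [complexDotProductCLM_apply, complexMulVecCLM_apply, dotProduct_mulVec, h, zero_dotProduct]

theorem isRoot_charpoly_of_complexMulVecCLM_eq_smul [DecidableEq ι] {M : Matrix ι ι ℝ} {μ : ℂ}
    {v : ι → ℂ} (hv : v ≠ 0) (h : complexMulVecCLM M v = μ • v) :
    (M.map ofReal).charpoly.IsRoot μ := by
  rw [← Matrix.charpoly_toLin', ← Module.End.hasEigenvalue_iff_isRoot_charpoly]
  exact Module.End.hasEigenvalue_of_hasEigenvector ⟨Module.End.mem_eigenspace_iff.mpr h, hv⟩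

theorem exists_eq_smul_of_complexMulVecCLM_eq_zero {M : Matrix ι ι ℝ} {u v₀ : ι → ℝ}
    (hker : ∀ x, M *ᵥ x = 0 → u ⬝ᵥ x = 0 → ∃ c : ℝ, x = c • v₀) {v : ι → ℂ}
    (hv : complexMulVecCLM M v = 0) (huv : complexDotProductCLM u v = 0) :
    ∃ c : ℂ, v = c • ofRealPiCLM v₀ := by
  have hdecomp : v = ofRealPiCLM (fun i => (v i).re) + I • ofRealPiCLM fun i => (v i).im :=
    funext fun i => by simp [ofRealPiCLM_apply, mul_comm I, re_add_im]
  generalize (fun i => (v i).re) = x at hdecomp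
  generalize (fun i => (v i).im) = z at hdecomp
  subst hdecomp
  simp only [map_add, map_smul, complexMulVecCLM_ofRealPiCLM, complexDotProductCLM_ofRealPiCLM]
    at hv huv
  have hre (a b : ℝ) (h : (a : ℂ) + I * b = 0) : a = 0 ∧ b = 0 := by
    simpa [Complex.ext_iff] using h
  have hM (i : ι) := hre ((M *ᵥ x) i) ((M *ᵥ z) i) (congrFun hv i)
  have hu := hre _ _ huv
  obtain ⟨a, rfl⟩ := hker x (funext fun i => (hM i).1) hu.1
  obtain ⟨b, rfl⟩ := hker z (funext fun i => (hM i).2) hu.2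
  exact ⟨a + I * b, funext fun i => by simp [ofRealPiCLM_apply]; ring⟩

theorem eventually_tendsto_dotProduct_smul [DecidableEq ι] {M N : Matrix ι ι ℝ} {τ : ℝ}
    (hτ : 0 < τ) (hM : ∀ μ ≠ 0, (M.map ofReal).charpoly.IsRoot μ → IsDelayStable τ μ)
    {u b : ι → ℝ} (huM : u ᵥ* M = 0) (huN : u ᵥ* N = 0) (hMb : M *ᵥ b = 0) (hNb : N *ᵥ b = 0)
    (hub : u ⬝ᵥ b = 1) {v₀ w : ι → ℝ}
    (hker : ∀ x, M *ᵥ x = 0 → u ⬝ᵥ x = 0 → ∃ c : ℝ, x = c • v₀)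
    (hwM : w ᵥ* M = 0) (hwN : w ⬝ᵥ N *ᵥ v₀ / w ⬝ᵥ v₀ < 0) :
    ∀ᶠ ε : ℝ in 𝓝[>] 0, ∀ y : ℝ → ι → ℝ, IsDelaySolution ((M + ε • N) *ᵥ ·) τ y →
      Tendsto y atTop (𝓝 ((u ⬝ᵥ y 0) • b)) := by
  have hstable := eventually_isDelayStable_add_smul (A := complexMulVecCLM M)
    (B := complexMulVecCLM N) hτ.le
    (fun μ hμ v hv h => hM μ hμ (isRoot_charpoly_of_complexMulVecCLM_eq_smul hv h))
    (ℓ := complexDotProductCLM u)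
    (fun v hv huv => exists_eq_smul_of_complexMulVecCLM_eq_zero hker hv huv)
    (complexDotProductCLM_complexMulVecCLM hwM)
    (by simpa only [complexMulVecCLM_ofRealPiCLM, complexDotProductCLM_ofRealPiCLM, ← ofReal_div,
      ofReal_re] using hwN)
  filter_upwards [hstable] with ε hε y hy
  have huε : u ᵥ* (M + ε • N) = 0 := by
    rw [Matrix.vecMul_add, Matrix.vecMul_smul, huM, huN, smul_zero, add_zero]
  have hbε : (M + ε • N) *ᵥ b = 0 := by
    rw [Matrix.add_mulVec, Matrix.smul_mulVec, hMb, hNb, smul_zero, add_zero]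
  have hY : IsDelaySolution (complexMulVecCLM (M + ε • N)) τ fun t => ofRealPiCLM (y t) :=
    hy.map ofRealPiCLM fun x => (complexMulVecCLM_ofRealPiCLM _ x).symm
  have hlim := hY.tendsto_smul_of_conserved hτ (complexDotProductCLM_complexMulVecCLM huε)
    (b := ofRealPiCLM b) (by rw [complexMulVecCLM_ofRealPiCLM, hbε, map_zero])
    (by rw [complexDotProductCLM_ofRealPiCLM, hub, ofReal_one])
    (fun μ v hv huv h => hε μ v hv huv (complexMulVecCLM_add_smul M N ε ▸ h))
  rw [complexDotProductCLM_ofRealPiCLM] at hlim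
  refine tendsto_pi_nhds.mpr fun i => ?_
  simpa [ofRealPiCLM_apply, Function.comp_def] using
    (continuous_re.tendsto _).comp (tendsto_pi_nhds.mp hlim i)

end RealMatrix

section WeightedDigraph

variable {V : Type*} {A : Matrix V V ℝ}

/-- A nonnegative weight matrix whose digraph of positive entries is strongly connected. Unlike
`Matrix.IsIrreducible`, this asks for no cycle of positive length, so the zero matrix on one node
qualifies. -/
structure IsStronglyConnectedWeight (A : Matrix V V ℝ) : Prop where
  nonneg : ∀ i j, 0 ≤ A i j
  reflTransGen : ∀ i j, Relation.ReflTransGen (fun k l => 0 < A k l) i j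

theorem IsStronglyConnectedWeight.transpose (hA : IsStronglyConnectedWeight A) :
    IsStronglyConnectedWeight Aᵀ where
  nonneg i j := hA.nonneg j i
  reflTransGen i j := Relation.reflTransGen_swap.mp (hA.reflTransGen j i)

variable [Fintype V] [DecidableEq V]

/-- The Laplacian of a weighted digraph whose degrees are the row sums. -/
def inLaplacian (A : Matrix V V ℝ) : Matrix V V ℝ := diagonal (fun i => ∑ j, A i j) - A

/-- The Laplacian of a weighted digraph whose degrees are the column sums. -/
def outLaplacian (A : Matrix V V ℝ) : Matrix V V ℝ := diagonal (fun i => ∑ j, A j i) - A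

theorem inLaplacian_mulVec_apply (A : Matrix V V ℝ) (x : V → ℝ) (i : V) :
    (inLaplacian A *ᵥ x) i = ∑ j, A i j * (x i - x j) := by
  rw [inLaplacian, sub_mulVec, Pi.sub_apply, mulVec_diagonal]
  simp only [mulVec, dotProduct, mul_sub, Finset.sum_sub_distrib, Finset.sum_mul]

theorem outLaplacian_mulVec_apply (A : Matrix V V ℝ) (x : V → ℝ) (i : V) :
    (outLaplacian A *ᵥ x) i = (∑ j, A j i) * x i - ∑ j, A i j * x j := by
  rw [outLaplacian, sub_mulVec, Pi.sub_apply, mulVec_diagonal]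
  rfl

theorem inLaplacian_transpose (A : Matrix V V ℝ) : (inLaplacian A)ᵀ = outLaplacian Aᵀ := by
  simp [inLaplacian, outLaplacian]

theorem inLaplacian_mulVec_one (A : Matrix V V ℝ) : inLaplacian A *ᵥ 1 = 0 :=
  funext fun i => by simp [inLaplacian_mulVec_apply]

theorem vecMul_inLaplacian (A : Matrix V V ℝ) (x : V → ℝ) :
    x ᵥ* inLaplacian A = outLaplacian Aᵀ *ᵥ x := by
  rw [← inLaplacian_transpose, mulVec_transpose]

theorem one_vecMul_outLaplacian (A : Matrix V V ℝ) : 1 ᵥ* outLaplacian A = 0 := by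
  rw [← transpose_transpose A, ← inLaplacian_transpose, vecMul_transpose, inLaplacian_mulVec_one]

theorem IsStronglyConnectedWeight.eq_of_inLaplacian_mulVec_nonpos
    (hA : IsStronglyConnectedWeight A) {x : V → ℝ} (hx : inLaplacian A *ᵥ x ≤ 0) (i j : V) :
    x i = x j := by
  have : Nonempty V := ⟨i⟩
  obtain ⟨m, hm⟩ := Finite.exists_max x
  suffices h : ∀ k, x k = x m from (h i).trans (h j).symm
  intro k
  induction hA.reflTransGen m k with
  | refl => rfl
  | @tail a b _ hab ha =>
    have hterm : ∀ l ∈ Finset.univ, 0 ≤ A a l * (x a - x l) := fun l _ =>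
      mul_nonneg (hA.nonneg a l) (sub_nonneg.mpr (ha ▸ hm l))
    have hsum : ∑ l, A a l * (x a - x l) = 0 :=
      ((inLaplacian_mulVec_apply A x a).symm.trans_le (hx a)).antisymm (Finset.sum_nonneg hterm)
    have hb := (Finset.sum_eq_zero_iff_of_nonneg hterm).mp hsum b (Finset.mem_univ b)
    exact (sub_eq_zero.mp ((mul_eq_zero_iff_left hab.ne').mp hb)).symm.trans ha

theorem IsStronglyConnectedWeight.eq_zero_of_outLaplacian_mulVec_eq_zero
    (hA : IsStronglyConnectedWeight A) {x : V → ℝ} (hx : 0 ≤ x) (hAx : outLaplacian A *ᵥ x = 0)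
    {i : V} (hi : x i = 0) : x = 0 := by
  funext k
  induction hA.reflTransGen i k with
  | refl => exact hi
  | @tail a b _ hab ha =>
    have hsum : ∑ l, A a l * x l = 0 := by
      simpa [outLaplacian_mulVec_apply, ha] using congrFun hAx a
    have hb := (Finset.sum_eq_zero_iff_of_nonneg fun l _ => mul_nonneg (hA.nonneg a l) (hx l)).mp
      hsum b (Finset.mem_univ b)
    exact (mul_eq_zero_iff_left hab.ne').mp hb

theorem outLaplacian_mulVec_abs_eq_zero (hA : ∀ i j, 0 ≤ A i j) {x : V → ℝ}
    (hx : outLaplacian A *ᵥ x = 0) : outLaplacian A *ᵥ |x| = 0 := by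
  have hle : ∀ i ∈ Finset.univ, (outLaplacian A *ᵥ |x|) i ≤ 0 := fun i _ => by
    have hxi : (∑ j, A j i) * x i = ∑ j, A i j * x j := by
      simpa only [outLaplacian_mulVec_apply, Pi.zero_apply, sub_eq_zero] using congrFun hx i
    rw [outLaplacian_mulVec_apply, sub_nonpos]
    calc (∑ j, A j i) * |x i| = |∑ j, A i j * x j| := by
          rw [← hxi, abs_mul, abs_of_nonneg (Finset.sum_nonneg fun j _ => hA j i)]
      _ ≤ ∑ j, |A i j * x j| := Finset.abs_sum_le_sum_abs _ _
      _ = ∑ j, A i j * |x j| := by simp only [abs_mul, abs_of_nonneg (hA _ _)]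
  have hsum : ∑ i, (outLaplacian A *ᵥ |x|) i = 0 := by
    rw [← one_dotProduct, dotProduct_mulVec, one_vecMul_outLaplacian, zero_dotProduct]
  exact funext fun i => (Finset.sum_eq_zero_iff_of_nonpos hle).mp hsum i (Finset.mem_univ i)

theorem IsStronglyConnectedWeight.exists_pos_outLaplacian_mulVec_eq_zero [Nonempty V]
    (hA : IsStronglyConnectedWeight A) : ∃ p : V → ℝ, (∀ i, 0 < p i) ∧ outLaplacian A *ᵥ p = 0 := by
  have hdet : (outLaplacian A).det = 0 :=
    exists_vecMul_eq_zero_iff.mp ⟨1, one_ne_zero, one_vecMul_outLaplacian A⟩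
  obtain ⟨x, hx0, hx⟩ := exists_mulVec_eq_zero_iff.mpr hdet
  have habs := outLaplacian_mulVec_abs_eq_zero hA.nonneg hx
  refine ⟨|x|, fun i => (abs_nonneg (x i)).lt_of_ne' fun hi => hx0 (funext fun j => ?_), habs⟩
  have hzero := hA.eq_zero_of_outLaplacian_mulVec_eq_zero (fun j => abs_nonneg (x j)) habs hi
  exact abs_eq_zero.mp (congrFun hzero j)

theorem IsStronglyConnectedWeight.exists_eq_smul_of_outLaplacian_mulVec_eq_zero [Nonempty V]
    (hA : IsStronglyConnectedWeight A) {p x : V → ℝ} (hp : ∀ i, 0 < p i)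
    (hAp : outLaplacian A *ᵥ p = 0) (hAx : outLaplacian A *ᵥ x = 0) : ∃ c : ℝ, x = c • p := by
  obtain ⟨m, hm⟩ := Finite.exists_min fun i => x i / p i
  refine ⟨x m / p m, sub_eq_zero.mp (hA.eq_zero_of_outLaplacian_mulVec_eq_zero (i := m) ?_ ?_ ?_)⟩
  · exact fun i => sub_nonneg.mpr ((le_div_iff₀ (hp i)).mp (hm i))
  · rw [mulVec_sub, mulVec_smul, hAx, hAp, smul_zero, sub_zero]
  · simp [(hp m).ne']

theorem isRoot_charpoly_neg_inLaplacian_mem_closedBall (hA : ∀ i j, 0 ≤ A i j) {δ : ℝ}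
    (hδ : ∀ i, ∑ j, A i j ≤ δ) {μ : ℂ}
    (hμ : ((-inLaplacian A).map ofReal).charpoly.IsRoot μ) :
    μ ∈ Metric.closedBall (-δ : ℂ) δ := by
  rw [← charpoly_toLin', ← Module.End.hasEigenvalue_iff_isRoot_charpoly] at hμ
  obtain ⟨k, hk⟩ := eigenvalue_mem_ball hμ
  set ρ := ∑ j ∈ Finset.univ.erase k, A k j
  have hρ : ρ + A k k = ∑ j, A k j := Finset.sum_erase_add _ _ (Finset.mem_univ k)
  have hcenter : (-inLaplacian A).map ofReal k k = -(ρ : ℂ) := by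
    simp [inLaplacian, ← hρ]
  have hradius : ∑ j ∈ Finset.univ.erase k, ‖(-inLaplacian A).map ofReal k j‖ = ρ :=
    Finset.sum_congr rfl fun j hj => by
      simp [inLaplacian, diagonal_apply_ne' _ (Finset.ne_of_mem_erase hj), abs_of_nonneg (hA k j)]
  rw [hcenter, hradius] at hk
  have hρδ : ρ ≤ δ := by linarith [hA k k, hδ k]
  refine Metric.closedBall_subset_closedBall' ?_ hk
  rw [dist_neg_neg, dist_eq_norm, ← ofReal_sub, norm_real, Real.norm_eq_abs, abs_sub_comm,
    abs_of_nonneg (sub_nonneg.mpr hρδ), add_sub_cancel]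

end WeightedDigraph

section SurplusMatrix

variable {V : Type*} [Fintype V] [DecidableEq V] {A : Matrix V V ℝ}

/-- The matrix `M(ε)` of surplus-based averaging, acting on pairs (state, surplus). -/
def surplusMatrix (A : Matrix V V ℝ) (ε : ℝ) : Matrix (V ⊕ V) (V ⊕ V) ℝ :=
  fromBlocks (-inLaplacian A) (ε • 1) (inLaplacian A) (-outLaplacian A - ε • 1)

/-- The derivative of `M(ε)` in `ε`, by which every node feeds its surplus into its state. -/
def surplusFeedback (V : Type*) [DecidableEq V] : Matrix (V ⊕ V) (V ⊕ V) ℝ := fromBlocks 0 1 0 (-1)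

/-- The null vector of `M(0)` of total mass zero that a null vector `p` of the out-Laplacian
determines, unique up to scaling on a strongly connected digraph. -/
def surplusMode (p : V → ℝ) : V ⊕ V → ℝ :=
  Sum.elim (fun _ => ∑ k, p k) (-(Fintype.card V : ℝ) • p)

theorem surplusMatrix_zero (A : Matrix V V ℝ) :
    surplusMatrix A 0 = fromBlocks (-inLaplacian A) 0 (inLaplacian A) (-outLaplacian A) := by
  simp [surplusMatrix]

theorem surplusMatrix_eq_add_smul (A : Matrix V V ℝ) (ε : ℝ) :
    surplusMatrix A ε = surplusMatrix A 0 + ε • surplusFeedback V := by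
  simp [surplusMatrix, surplusFeedback, fromBlocks_smul, fromBlocks_add, sub_eq_add_neg]

theorem isRoot_charpoly_surplusMatrix_zero_mem_closedBall (hA : ∀ i j, 0 ≤ A i j) {δ : ℝ}
    (hin : ∀ i, ∑ j, A i j ≤ δ) (hout : ∀ i, ∑ j, A j i ≤ δ) {μ : ℂ}
    (hμ : ((surplusMatrix A 0).map ofReal).charpoly.IsRoot μ) :
    μ ∈ Metric.closedBall (-δ : ℂ) δ := by
  rw [surplusMatrix_zero, fromBlocks_map, Matrix.map_zero _ ofReal_zero,
    charpoly_fromBlocks_zero₁₂, Polynomial.IsRoot, Polynomial.eval_mul, mul_eq_zero] at hμ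
  rcases hμ with hμ | hμ
  · exact isRoot_charpoly_neg_inLaplacian_mem_closedBall hA hin hμ
  · refine isRoot_charpoly_neg_inLaplacian_mem_closedBall (A := Aᵀ) (fun i j => hA j i) hout ?_
    rwa [← charpoly_transpose, ← transpose_map, transpose_neg, inLaplacian_transpose,
      transpose_transpose]

theorem one_vecMul_surplusMatrix_zero (A : Matrix V V ℝ) : 1 ᵥ* surplusMatrix A 0 = 0 := by
  rw [surplusMatrix_zero, ← Sum.elim_one_one, vecMul_fromBlocks]
  simp [vecMul_neg, one_vecMul_outLaplacian]

theorem one_vecMul_surplusFeedback : 1 ᵥ* surplusFeedback V = 0 := by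
  rw [surplusFeedback, ← Sum.elim_one_one, vecMul_fromBlocks]
  simp [vecMul_neg]

theorem sumElim_zero_vecMul_surplusMatrix_zero {w : V → ℝ} (hw : w ᵥ* inLaplacian A = 0) :
    Sum.elim w 0 ᵥ* surplusMatrix A 0 = 0 := by
  simp [surplusMatrix_zero, vecMul_fromBlocks, vecMul_neg, hw]

theorem surplusMatrix_zero_mulVec_sumElim_const (A : Matrix V V ℝ) (c : ℝ) :
    surplusMatrix A 0 *ᵥ Sum.elim (fun _ => c) 0 = 0 := by
  have hc : inLaplacian A *ᵥ (fun _ => c) = 0 := funext fun i => by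
    simp [inLaplacian_mulVec_apply]
  simp [surplusMatrix_zero, fromBlocks_mulVec, neg_mulVec, hc]

theorem surplusFeedback_mulVec_sumElim (a b : V → ℝ) :
    surplusFeedback V *ᵥ Sum.elim a b = Sum.elim b (-b) := by
  simp [surplusFeedback, fromBlocks_mulVec, neg_mulVec]

theorem dotProduct_surplusFeedback_mulVec_surplusMode_div_neg [Nonempty V] {p w : V → ℝ}
    (hp : ∀ i, 0 < p i) (hw : ∀ i, 0 < w i) :
    Sum.elim w 0 ⬝ᵥ surplusFeedback V *ᵥ surplusMode p / Sum.elim w 0 ⬝ᵥ surplusMode p < 0 := by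
  have hnum : 0 < w ⬝ᵥ p := Finset.sum_pos (fun i _ => mul_pos (hw i) (hp i)) Finset.univ_nonempty
  have hpsum : 0 < ∑ k, p k := Finset.sum_pos (fun i _ => hp i) Finset.univ_nonempty
  have hden : 0 < w ⬝ᵥ fun _ => ∑ k, p k :=
    Finset.sum_pos (fun i _ => mul_pos (hw i) hpsum) Finset.univ_nonempty
  rw [surplusMode, surplusFeedback_mulVec_sumElim, sumElim_dotProduct_sumElim,
    sumElim_dotProduct_sumElim, zero_dotProduct, add_zero, zero_dotProduct, add_zero,
    dotProduct_smul, smul_eq_mul]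
  refine div_neg_of_neg_of_pos (mul_neg_of_neg_of_pos ?_ hnum) hden
  exact neg_neg_of_pos (by exact_mod_cast Fintype.card_pos)

theorem IsStronglyConnectedWeight.exists_eq_smul_of_surplusMatrix_zero_mulVec_eq_zero [Nonempty V]
    (hA : IsStronglyConnectedWeight A) {p : V → ℝ} (hp : ∀ i, 0 < p i)
    (hAp : outLaplacian A *ᵥ p = 0) {x : V ⊕ V → ℝ} (hx : surplusMatrix A 0 *ᵥ x = 0)
    (hsum : 1 ⬝ᵥ x = 0) :
    ∃ c : ℝ, x = c • surplusMode p := by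
  obtain ⟨a, b, rfl⟩ : ∃ a b, x = Sum.elim a b := ⟨_, _, (Sum.elim_comp_inl_inr x).symm⟩
  rw [surplusMatrix_zero, fromBlocks_mulVec, Sum.elim_comp_inl, Sum.elim_comp_inr] at hx
  have ha : inLaplacian A *ᵥ a = 0 := funext fun i => by
    simpa [neg_mulVec] using congrFun hx (Sum.inl i)
  have hb : outLaplacian A *ᵥ b = 0 := funext fun i => by
    simpa [neg_mulVec, ha] using congrFun hx (Sum.inr i)
  obtain ⟨β, rfl⟩ := hA.exists_eq_smul_of_outLaplacian_mulVec_eq_zero hp hAp hb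
  have hconst (i : V) : ∑ j, a j = Fintype.card V * a i := by
    simp [fun j => hA.eq_of_inLaplacian_mulVec_nonpos ha.le j i]
  have hcard : (Fintype.card V : ℝ) ≠ 0 := by simp
  refine ⟨-β / Fintype.card V, funext ?_⟩
  rintro (i | i)
  · have hbalance : Fintype.card V * a i + β * ∑ k, p k = 0 := by
      simpa [one_dotProduct, Fintype.sum_sum_type, hconst i, ← Finset.mul_sum] using hsum
    simp only [surplusMode, Sum.elim_inl, Pi.smul_apply, smul_eq_mul]
    field_simp
    linear_combination hbalance
  · simp only [surplusMode, Sum.elim_inr, Pi.smul_apply, smul_eq_mul]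
    field_simp

theorem isDelayStable_of_isRoot_charpoly_surplusMatrix_zero [Nonempty V] (hA : ∀ i j, 0 ≤ A i j)
    {δ r τ : ℝ} (hin : ∀ i, ∑ j, A i j ≤ δ) (hout : ∀ i, ∑ j, A j i ≤ δ) (hτ0 : 0 < τ)
    (hτ : τ < 1 / (2 * δ) * Real.arctan (-r / δ)) {μ : ℂ} (hre : μ.re ≤ r)
    (hμ : ((surplusMatrix A 0).map ofReal).charpoly.IsRoot μ) : IsDelayStable τ μ := by
  have hδ : 0 < δ := by
    inhabit V
    refine ((Finset.sum_nonneg fun j _ => hA default j).trans (hin default)).lt_of_ne' ?_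
    rintro rfl
    simp [hτ0.not_gt] at hτ
  have hball : ‖μ + δ‖ ≤ δ := by
    simpa [dist_eq_norm] using isRoot_charpoly_surplusMatrix_zero_mem_closedBall hA hin hout hμ
  refine isDelayStable_of_re_le_of_abs_im_le hδ hτ0.le hτ hre ?_ ?_
  · simpa using (abs_im_le_norm _).trans hball
  · calc ‖μ‖ = ‖μ + δ - δ‖ := by rw [add_sub_cancel_right]
      _ ≤ ‖μ + δ‖ + ‖(δ : ℂ)‖ := norm_sub_le _ _
      _ ≤ δ + δ := by
        rw [norm_real, Real.norm_of_nonneg hδ.le]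
        exact add_le_add_left hball δ
      _ = 2 * δ := (two_mul δ).symm

end SurplusMatrix

theorem stmt2_general {V : Type*} [Fintype V] [DecidableEq V] [Nonempty V] {A : Matrix V V ℝ}
    (hA : IsStronglyConnectedWeight A) {δ r τ : ℝ} (hin : ∀ i, ∑ j, A i j ≤ δ)
    (hout : ∀ i, ∑ j, A j i ≤ δ)
    (hr : ∀ μ ≠ 0, ((surplusMatrix A 0).map ofReal).charpoly.IsRoot μ → μ.re ≤ r)
    (hτ0 : 0 < τ) (hτ : τ < 1 / (2 * δ) * Real.arctan (-r / δ)) :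
    ∃ εtilde : ℝ, 0 < εtilde ∧ ∀ ε : ℝ, 0 < ε → ε ≤ εtilde → ∀ y : ℝ → V ⊕ V → ℝ,
      IsDelaySolution (surplusMatrix A ε *ᵥ ·) τ y →
        Tendsto y atTop (𝓝 (Sum.elim (fun _ => (∑ k, y 0 k) / Fintype.card V) 0)) := by
  obtain ⟨p, hp, hAp⟩ := hA.exists_pos_outLaplacian_mulVec_eq_zero
  obtain ⟨w, hw, hAw⟩ := hA.transpose.exists_pos_outLaplacian_mulVec_eq_zero
  rw [← vecMul_inLaplacian] at hAw
  have hstable (μ : ℂ) (hμ0 : μ ≠ 0)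
      (hμ : ((surplusMatrix A 0).map ofReal).charpoly.IsRoot μ) : IsDelayStable τ μ :=
    isDelayStable_of_isRoot_charpoly_surplusMatrix_zero hA.nonneg hin hout hτ0 hτ (hr μ hμ0 hμ) hμ
  have hlim := eventually_tendsto_dotProduct_smul hτ0 hstable (one_vecMul_surplusMatrix_zero A)
    one_vecMul_surplusFeedback
    (surplusMatrix_zero_mulVec_sumElim_const A (Fintype.card V : ℝ)⁻¹)
    (by rw [surplusFeedback_mulVec_sumElim, neg_zero, Sum.elim_zero_zero])
    (by simp [one_dotProduct])
    (fun x => hA.exists_eq_smul_of_surplusMatrix_zero_mulVec_eq_zero hp hAp)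
    (sumElim_zero_vecMul_surplusMatrix_zero hAw)
    (dotProduct_surplusFeedback_mulVec_surplusMode_div_neg hp hw)
  obtain ⟨εtilde, hε0, hε⟩ := mem_nhdsGT_iff_exists_Ioc_subset.mp hlim
  refine ⟨εtilde, hε0, fun ε hε1 hε2 y hy => ?_⟩
  convert hε ⟨hε1, hε2⟩ y (surplusMatrix_eq_add_smul A ε ▸ hy) using 2
  ext (i | i) <;> simp [div_eq_mul_inv, one_dotProduct]

theorem StronglyConnected.isStronglyConnectedWeight_adjM {n : ℕ} {E : Fin n → Fin n → Prop}
    [DecidableRel E] (hE : StronglyConnected n E) : IsStronglyConnectedWeight (adjM n E) where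
  nonneg i j := by
    rw [adjM]
    split_ifs <;> norm_num
  reflTransGen i j := by
    obtain rfl | hij := eq_or_ne i j
    · exact .refl
    · refine Relation.ReflTransGen.mono (fun a b hab => ?_) i j (hE i j hij).to_reflTransGen
      simp [adjM, hab]

/-- Theorem 2: `G` strongly connected, `δ̄` the largest in/out degree,
`r` the largest real part among nonzero eigenvalues of `M(0)`, and
`τ̃ = (1/(2δ̄))·arctan(−r/δ̄)`.  For every delay `0 < τ < τ̃` there is `ε̃ > 0` such that
for all `ε ∈ (0, ε̃]`, every solution of `ẏ(t) = M(ε)y(t−τ)` with constant initial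
condition `y(θ) = (x₀, 0)` on `[−τ, 0]` has its `x`-component converge to the average
of `x₀`. -/
theorem stmt2 (n : ℕ) (E : Fin n → Fin n → Prop) [DecidableRel E]
    (hloop : ∀ i, ¬ E i i) (hsc : StronglyConnected n E)
    (δbar : ℝ)
    (hδ : IsGreatest {d : ℝ | ∃ i : Fin n, d = max (degIn n E i) (degOut n E i)} δbar)
    (r : ℝ)
    (hr : IsGreatest {x : ℝ | ∃ μ : ℂ, (MmatC n E 0).charpoly.IsRoot μ ∧ μ ≠ 0 ∧
        x = μ.re} r)
    (τ : ℝ) (hτpos : 0 < τ)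
    (hτ : τ < (1 / (2 * δbar)) * Real.arctan ((-r) / δbar)) :
    ∃ εtilde : ℝ, 0 < εtilde ∧ ∀ ε : ℝ, 0 < ε → ε ≤ εtilde →
      ∀ (y : ℝ → (Fin n ⊕ Fin n → ℝ)) (x₀ : Fin n → ℝ),
        ContinuousOn y (Set.Ici (-τ)) →
        (∀ t : ℝ, 0 < t → HasDerivAt y ((Mmat n E ε).mulVec (y (t - τ))) t) →
        (∀ θ ∈ Set.Icc (-τ) (0 : ℝ), y θ = Sum.elim x₀ 0) →
        Filter.Tendsto (fun t : ℝ => fun i : Fin n => y t (Sum.inl i))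
          Filter.atTop (nhds (fun _ : Fin n => (∑ j, x₀ j) / (n : ℝ))) := by
  have : Nonempty (Fin n) := hδ.1.nonempty
  obtain ⟨εtilde, hε0, hε⟩ := stmt2_general hsc.isStronglyConnectedWeight_adjM (δ := δbar)
    (fun i => (le_max_left _ _).trans (hδ.2 ⟨i, rfl⟩))
    (fun i => (le_max_right _ _).trans (hδ.2 ⟨i, rfl⟩))
    (fun μ hμ0 hμ => hr.2 ⟨μ, hμ, hμ0, rfl⟩) hτpos hτ
  refine ⟨εtilde, hε0, fun ε hε1 hε2 y x₀ hcont hderiv hinit => tendsto_pi_nhds.mpr fun i => ?_⟩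
  have hlim := tendsto_pi_nhds.mp (hε ε hε1 hε2 y ⟨hcont, hderiv⟩) (Sum.inl i)
  simpa [hinit 0 ⟨by linarith, le_rfl⟩] using hlim
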